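/- arXiv:2502.14237 — 2 statements merged into one kernel-verified Lean document; each statement's English description precedes it below -/
import Mathlib

section
/- For a homogeneous polynomial p of degree k ≥ 1 on ℝⁿ (n ≥ 2), ∫_{S^{n−1}} p = (k(n+k−2))⁻¹ ∫_{S^{n−1}} Δp. -/
open MeasureTheory Metric

/-- The partial derivative `∂ᵢ f` on `ℝⁿ = EuclideanSpace ℝ (Fin n)`. -/
noncomputable def pd (n : ℕ) (i : Fin n) (f : EuclideanSpace ℝ (Fin n) → ℝ)
    (x : EuclideanSpace ℝ (Fin n)) : ℝ :=
  fderiv ℝ f x (EuclideanSpace.single i 1)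

/-- The Euclidean Laplacian `Δf = ∑ᵢ ∂ᵢ∂ᵢ f` on `ℝⁿ`. -/
noncomputable def lap (n : ℕ) (f : EuclideanSpace ℝ (Fin n) → ℝ)
    (x : EuclideanSpace ℝ (Fin n)) : ℝ :=
  ∑ i, pd n i (pd n i f) x

/-!
Integrate `Δ f` over the whole space against a radial weight `χ(‖x‖²)` whose support is compact and
misses the origin, so that neither the degree `c` of `f` nor its behaviour at `0` matters.
Integration by parts and Euler's identity `f'(x) x = c f(x)` turn the result into
`-c ∫ 2 χ'(‖x‖²) f`. In polar coordinates both integrals are a one-dimensional factor times an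
integral over the sphere; one more integration by parts in `r` makes the two one-dimensional factors
proportional, and a positive common factor cancels.
-/

open Set Function Module Filter Laplacian

theorem integral_volumeIoiPow {F : Type*} [NormedAddCommGroup F] [NormedSpace ℝ F] (n : ℕ)
    (g : ℝ → F) :
    ∫ r : Ioi (0 : ℝ), g r ∂Measure.volumeIoiPow n = ∫ r in Ioi (0 : ℝ), r ^ n • g r := by
  simp only [Measure.volumeIoiPow, ENNReal.ofReal]
  rw [integral_withDensity_eq_integral_smul
      (measurable_subtype_coe.pow_const _).real_toNNReal,
    integral_subtype_comap measurableSet_Ioi fun r : ℝ ↦ (r ^ n).toNNReal • g r]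
  refine setIntegral_congr_fun measurableSet_Ioi fun r hr ↦ ?_
  simp only [NNReal.smul_def, Real.coe_toNNReal _ (pow_nonneg (mem_Ioi.1 hr).le n)]

/-- Positive homogeneity of real degree `c`, as for a function that need not be smooth, or even
bounded, at the origin. Scaling the origin shows that `f 0 = 0` unless `c = 0`. -/
def IsPosHomogeneous {E F : Type*} [AddCommMonoid E] [Module ℝ E] [AddCommMonoid F]
    [Module ℝ F] (c : ℝ) (f : E → F) : Prop :=
  ∀ t : ℝ, 0 < t → ∀ x, f (t • x) = t ^ c • f x

namespace IsPosHomogeneous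

section Calculus

variable {E F : Type*} [NormedAddCommGroup E] [NormedAddCommGroup F] [NormedSpace ℝ F]
  {c : ℝ} {f : E → F}

protected theorem fderiv [NormedSpace ℝ E] (hf : IsPosHomogeneous c f) :
    IsPosHomogeneous (c - 1) (fderiv ℝ f) := by
  intro t ht x
  have hscale : t • fderiv ℝ f (t • x) = t ^ c • fderiv ℝ f x := by
    rw [← fderiv_comp_smul, funext (hf t ht)]
    exact congrFun (fderiv_const_smul_field (f := f) (t ^ c)) x
  rw [← inv_smul_smul₀ ht.ne' (fderiv ℝ f (t • x)), hscale, smul_smul,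
    Real.rpow_sub_one ht.ne', div_eq_inv_mul]

theorem fderiv_apply_self [NormedSpace ℝ E] (hf : IsPosHomogeneous c f) {x : E}
    (hx : DifferentiableAt ℝ f x) : fderiv ℝ f x x = c • f x := by
  have hray : HasDerivAt (fun t : ℝ ↦ t • x) x 1 := by
    simpa using (hasDerivAt_id (1 : ℝ)).smul_const x
  have hchain : HasDerivAt (fun t : ℝ ↦ f (t • x)) (fderiv ℝ f x x) 1 :=
    HasFDerivAt.comp_hasDerivAt 1 (by simpa using hx.hasFDerivAt) hray
  have hpow : HasDerivAt (fun t : ℝ ↦ t ^ c • f x) (c • f x) 1 := by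
    simpa using
      (Real.hasDerivAt_rpow_const (x := 1) (p := c) (Or.inl one_ne_zero)).smul_const (f x)
  refine hchain.unique (hpow.congr_of_eventuallyEq ?_)
  filter_upwards [lt_mem_nhds one_pos] with t ht using hf t ht x

protected theorem laplacian [InnerProductSpace ℝ E] [FiniteDimensional ℝ E]
    (hf : IsPosHomogeneous c f) :
    IsPosHomogeneous (c - 2) (Δ f) := by
  intro t ht x
  have hsecond := hf.fderiv.fderiv t ht x
  rw [show c - 1 - 1 = c - 2 by ring] at hsecond
  simp only [InnerProductSpace.laplacian_eq_iteratedFDeriv_stdOrthonormalBasis,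
    iteratedFDeriv_two_apply, hsecond, smul_apply, Finset.smul_sum]

end Calculus

section PolarCoordinates

variable {E F : Type*} [NormedAddCommGroup E] [NormedSpace ℝ E] [FiniteDimensional ℝ E]
  [Nontrivial E] [MeasurableSpace E] [BorelSpace E] [NormedAddCommGroup F] [NormedSpace ℝ F]
  {c : ℝ} {f : E → F}

theorem integral_fun_norm_smul (hf : IsPosHomogeneous c f) (μ : Measure E) [μ.IsAddHaarMeasure]
    (g : ℝ → ℝ) :
    ∫ x, g ‖x‖ • f x ∂μ =
      (∫ r in Ioi (0 : ℝ), r ^ (finrank ℝ E + c - 1) * g r) •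
        ∫ y : sphere (0 : E) 1, f y ∂μ.toSphere := by
  have hpolar : ∀ x : ({0}ᶜ : Set E), g ‖(x : E)‖ • f x =
      ((homeomorphUnitSphereProd E x).2.1 ^ c * g (homeomorphUnitSphereProd E x).2) •
        f (homeomorphUnitSphereProd E x).1 := fun x ↦ by
    have hx : 0 < ‖(x : E)‖ := norm_pos_iff.2 x.2
    have hray := hf ‖(x : E)‖ hx (‖(x : E)‖⁻¹ • (x : E))
    rw [smul_inv_smul₀ hx.ne'] at hray
    rw [homeomorphUnitSphereProd_apply_snd_coe, homeomorphUnitSphereProd_apply_fst_coe, mul_comm,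
      mul_smul, ← hray]
  have hradial : ∀ r ∈ Ioi (0 : ℝ), r ^ (finrank ℝ E - 1) • (r ^ c * g r) =
      r ^ (finrank ℝ E + c - 1) * g r := fun r hr ↦ by
    rw [smul_eq_mul, ← mul_assoc, ← Real.rpow_natCast, ← Real.rpow_add hr,
      Nat.cast_pred (finrank_pos (R := ℝ) (M := E))]
    ring_nf
  calc ∫ x, g ‖x‖ • f x ∂μ
      = ∫ x : ({0}ᶜ : Set E), g ‖(x : E)‖ • f x ∂(μ.comap (↑)) := by
        rw [integral_subtype_comap (measurableSet_singleton _).compl fun x ↦ g ‖x‖ • f x,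
          restrict_compl_singleton]
    _ = ∫ z : sphere (0 : E) 1 × Ioi (0 : ℝ), ((z.2 : ℝ) ^ c * g z.2) • f z.1
          ∂μ.toSphere.prod (Measure.volumeIoiPow (finrank ℝ E - 1)) := by
        simp_rw [hpolar]
        exact μ.measurePreserving_homeomorphUnitSphereProd.integral_comp
          (Homeomorph.measurableEmbedding _)
          fun z : sphere (0 : E) 1 × Ioi (0 : ℝ) ↦ ((z.2 : ℝ) ^ c * g z.2) • f z.1
    _ = (∫ r : Ioi (0 : ℝ), (r : ℝ) ^ c * g r ∂Measure.volumeIoiPow (finrank ℝ E - 1)) •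
          ∫ y : sphere (0 : E) 1, f y ∂μ.toSphere := by
        rw [← integral_prod_smul, ← integral_prod_swap]
        rfl
    _ = _ := by
        rw [integral_volumeIoiPow _ fun r : ℝ ↦ r ^ c * g r,
          setIntegral_congr_fun measurableSet_Ioi hradial]

end PolarCoordinates

end IsPosHomogeneous

section CompactSupport

variable {E F : Type*} [NormedAddCommGroup E] [NormedAddCommGroup F] [NormedSpace ℝ F]

theorem integrable_smul_of_hasCompactSupport {X : Type*} [TopologicalSpace X] [MeasurableSpace X]
    [OpensMeasurableSpace X] {μ : Measure X} [IsFiniteMeasureOnCompacts μ]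
    {u : X → ℝ} {g : X → F} (hu : Continuous u) (huc : HasCompactSupport u)
    (hg : ∀ x ∈ tsupport u, ContinuousAt g x) : Integrable (fun x ↦ u x • g x) μ := by
  have hcont : Continuous fun x ↦ u x • g x := continuous_of_tsupport fun x hx ↦
    hu.continuousAt.smul (hg x (tsupport_smul_subset_left u g hx))
  exact hcont.integrable_of_hasCompactSupport huc.smul_right

theorem hasCompactSupport_comp_norm_sq [ProperSpace E] {R : Type*} [Zero R] {χ : ℝ → R}
    (hχ : HasCompactSupport χ) :
    HasCompactSupport fun x : E ↦ χ (‖x‖ ^ 2) := by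
  rw [hasCompactSupport_iff_eventuallyEq, coclosedCompact_eq_cocompact] at hχ ⊢
  exact ((tendsto_pow_atTop two_ne_zero).comp (tendsto_norm_cocompact_atTop (E := E))).eventually
    (hχ.filter_mono atTop_le_cocompact)

theorem zero_notMem_tsupport_comp_norm_sq {R : Type*} [Zero R] {χ : ℝ → R} (hχ : 0 ∉ tsupport χ) :
    (0 : E) ∉ tsupport fun x ↦ χ (‖x‖ ^ 2) := fun h ↦
  hχ (by simpa using tsupport_comp_subset_preimage χ (by fun_prop) h)

theorem integral_smul_laplacian [InnerProductSpace ℝ E] [FiniteDimensional ℝ E]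
    [MeasurableSpace E] [BorelSpace E] (μ : Measure E) [μ.IsAddHaarMeasure]
    {ι : Type*} [Fintype ι] (b : OrthonormalBasis ι ℝ E) {u : E → ℝ} {f : E → F}
    (hu : ContDiff ℝ 1 u) (huc : HasCompactSupport u)
    (hf : ∀ x ∈ tsupport u, ContDiffAt ℝ 2 f x) :
    ∫ x, u x • Δ f x ∂μ = -∫ x, ∑ i, fderiv ℝ u x (b i) • fderiv ℝ f x (b i) ∂μ := by
  have hf' : ∀ x ∈ tsupport u, ContDiffAt ℝ 1 (fderiv ℝ f) x := fun x hx ↦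
    (hf x hx).fderiv_right (by norm_num)
  have hint_second : ∀ i, Integrable (fun x ↦ u x • fderiv ℝ (fderiv ℝ f) x (b i) (b i)) μ :=
    fun i ↦ integrable_smul_of_hasCompactSupport hu.continuous huc fun x hx ↦
      ((((hf' x hx).fderiv_right (m := 0) (by norm_num)).continuousAt.clm_apply
        continuousAt_const).clm_apply continuousAt_const)
  have hint_first : ∀ i, Integrable (fun x ↦ u x • fderiv ℝ f x (b i)) μ :=
    fun i ↦ integrable_smul_of_hasCompactSupport hu.continuous huc fun x hx ↦
      (hf' x hx).continuousAt.clm_apply continuousAt_const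
  have hint_mixed : ∀ i, Integrable (fun x ↦ fderiv ℝ u x (b i) • fderiv ℝ f x (b i)) μ :=
    fun i ↦ integrable_smul_of_hasCompactSupport
      ((hu.continuous_fderiv one_ne_zero).clm_apply continuous_const)
      (huc.fderiv_apply ℝ (b i)) fun x hx ↦
        (hf' x (tsupport_fderiv_apply_subset ℝ (b i) hx)).continuousAt.clm_apply continuousAt_const
  have hparts : ∀ i, ∫ x, u x • fderiv ℝ (fderiv ℝ f) x (b i) (b i) ∂μ =
      -∫ x, fderiv ℝ u x (b i) • fderiv ℝ f x (b i) ∂μ := fun i ↦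
    integral_bilinear_hasFDerivAt_right_eq_neg_left_of_integrable
      (B := ContinuousLinearMap.lsmul ℝ ℝ) (g := fun x ↦ fderiv ℝ f x (b i))
      (g' := fun x ↦ (fderiv ℝ (fderiv ℝ f) x).flip (b i))
      (hint_mixed i) (hint_second i) (hint_first i)
      (fun x _ ↦ (hu.differentiable one_ne_zero x).hasFDerivAt)
      (fun x hx ↦ by
        simpa using ((hf' x hx).differentiableAt one_ne_zero).hasFDerivAt.clm_apply
          (hasFDerivAt_const (b i) x))
  simp only [InnerProductSpace.laplacian_eq_iteratedFDeriv_orthonormalBasis f b,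
    iteratedFDeriv_two_apply, Matrix.cons_val_zero, Matrix.cons_val_one, Finset.smul_sum]
  rw [integral_finsetSum _ fun i _ ↦ hint_second i, integral_finsetSum _ fun i _ ↦ hint_mixed i,
    ← Finset.sum_neg_distrib]
  exact Finset.sum_congr rfl fun i _ ↦ hparts i

theorem integrable_rpow_mul (a : ℝ) {ψ : ℝ → ℝ} (hψ : Continuous ψ) (hψc : HasCompactSupport ψ)
    (hψ0 : 0 ∉ tsupport ψ) : Integrable fun r ↦ r ^ a * ψ r := by
  simpa only [smul_eq_mul, mul_comm] using integrable_smul_of_hasCompactSupport hψ hψc fun r hr ↦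
    Real.continuousAt_rpow_const r a (Or.inl fun h ↦ hψ0 (h ▸ hr))

theorem setIntegral_rpow_mul_deriv (a : ℝ) {ψ : ℝ → ℝ} (hψ : ContDiff ℝ 1 ψ)
    (hψc : HasCompactSupport ψ) (hψ0 : 0 ∉ tsupport ψ) :
    ∫ r in Ioi (0 : ℝ), r ^ a * deriv ψ r = -(a * ∫ r in Ioi (0 : ℝ), r ^ (a - 1) * ψ r) := by
  have hne : ∀ r ∈ tsupport ψ, r ≠ 0 := fun r hr h ↦ hψ0 (h ▸ hr)
  have hint_deriv := integrable_rpow_mul a (hψ.continuous_deriv le_rfl) hψc.deriv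
    fun h ↦ hψ0 (tsupport_deriv_subset h)
  have hint := integrable_rpow_mul (a - 1) hψ.continuous hψc hψ0
  have hsmooth : ContDiff ℝ 1 fun r ↦ r ^ a * ψ r := by
    refine contDiff_iff_contDiffAt.2 fun r ↦ ?_
    by_cases hr : r ∈ tsupport ψ
    · exact (Real.contDiffAt_rpow_const (n := 1) (Or.inl (hne r hr))).mul hψ.contDiffAt
    · refine contDiffAt_const (c := (0 : ℝ)) |>.congr_of_eventuallyEq ?_
      filter_upwards [notMem_tsupport_iff_eventuallyEq.1 hr] with s hs
      simp [hs]
  have hderiv : ∀ r ∈ Ioi (0 : ℝ), deriv (fun r ↦ r ^ a * ψ r) r =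
      a * (r ^ (a - 1) * ψ r) + r ^ a * deriv ψ r := fun r hr ↦ by
    rw [← mul_assoc]
    exact ((Real.hasDerivAt_rpow_const (Or.inl (mem_Ioi.1 hr).ne')).mul
      (hψ.differentiable one_ne_zero r).hasDerivAt).deriv
  have hftc := HasCompactSupport.integral_Ioi_deriv_eq hsmooth hψc.mul_left 0
  rw [setIntegral_congr_fun measurableSet_Ioi hderiv,
    integral_add (hint.const_mul a).integrableOn hint_deriv.integrableOn, integral_const_mul,
    image_eq_zero_of_notMem_tsupport hψ0] at hftc
  linarith

theorem hasCompactSupport_comp_sq {R : Type*} [Zero R] {χ : ℝ → R} (hχ : HasCompactSupport χ) :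
    HasCompactSupport fun r ↦ χ (r ^ 2) := by
  simpa [sq_abs] using hasCompactSupport_comp_norm_sq (E := ℝ) hχ

theorem zero_notMem_tsupport_comp_sq {R : Type*} [Zero R] {χ : ℝ → R} (hχ : 0 ∉ tsupport χ) :
    0 ∉ tsupport fun r ↦ χ (r ^ 2) := by
  simpa [sq_abs] using zero_notMem_tsupport_comp_norm_sq (E := ℝ) hχ

theorem setIntegral_rpow_mul_deriv_comp_sq (a : ℝ) {χ : ℝ → ℝ} (hχ : ContDiff ℝ 1 χ)
    (hχc : HasCompactSupport χ) (hχ0 : 0 ∉ tsupport χ) :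
    ∫ r in Ioi (0 : ℝ), r ^ (a + 2) * (2 * deriv χ (r ^ 2)) =
      -((a + 1) * ∫ r in Ioi (0 : ℝ), r ^ a * χ (r ^ 2)) := by
  have hparts := setIntegral_rpow_mul_deriv (a + 1) (ψ := fun r ↦ χ (r ^ 2))
    (hχ.comp (contDiff_id.pow 2)) (hasCompactSupport_comp_sq hχc) (zero_notMem_tsupport_comp_sq hχ0)
  rw [add_sub_cancel_right] at hparts
  rw [← hparts]
  refine setIntegral_congr_fun measurableSet_Ioi fun r hr ↦ ?_
  have hderiv : HasDerivAt (fun r ↦ χ (r ^ 2)) (deriv χ (r ^ 2) * (2 * r)) r := by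
    simpa [comp_def] using
      (hχ.differentiable one_ne_zero (r ^ 2)).hasDerivAt.comp r (hasDerivAt_pow 2 r)
  rw [hderiv.deriv, show a + 2 = a + 1 + 1 by ring, Real.rpow_add_one (mem_Ioi.1 hr).ne']
  ring

theorem setIntegral_rpow_mul_pos (a : ℝ) {ψ : ℝ → ℝ} (hψ : Continuous ψ)
    (hψc : HasCompactSupport ψ) (hψ0 : 0 ∉ tsupport ψ) (hnonneg : 0 ≤ ψ) {s : ℝ} (hs : 0 < s)
    (hψs : ψ s ≠ 0) : 0 < ∫ r in Ioi (0 : ℝ), r ^ a * ψ r := by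
  have hsupport : support (fun r ↦ r ^ a * ψ r) ∩ Ioi 0 = support ψ ∩ Ioi 0 := by
    ext r
    simp +contextual [and_congr_left_iff, (Real.rpow_pos_of_pos · a |>.ne')]
  rw [setIntegral_pos_iff_support_of_nonneg_ae
      ((ae_restrict_mem measurableSet_Ioi).mono fun r hr ↦
        mul_nonneg (Real.rpow_nonneg (mem_Ioi.1 hr).le a) (hnonneg r))
      (integrable_rpow_mul a hψ hψc hψ0).integrableOn, hsupport]
  exact (hψ.isOpen_support.inter isOpen_Ioi).measure_pos volume ⟨s, hψs, hs⟩

end CompactSupport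

section RadialWeight

variable {E F : Type*} [NormedAddCommGroup E] [InnerProductSpace ℝ E] [FiniteDimensional ℝ E]
  [MeasurableSpace E] [BorelSpace E] [NormedAddCommGroup F] [NormedSpace ℝ F]

theorem fderiv_comp_norm_sq_apply {G : Type*} [NormedAddCommGroup G] [InnerProductSpace ℝ G]
    {χ : ℝ → ℝ} {x : G} (hχ : DifferentiableAt ℝ χ (‖x‖ ^ 2)) (v : G) :
    fderiv ℝ (fun x ↦ χ (‖x‖ ^ 2)) x v = 2 * deriv χ (‖x‖ ^ 2) * inner ℝ x v := by
  have h : HasFDerivAt (fun x : G ↦ χ (‖x‖ ^ 2)) _ x :=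
    hχ.hasDerivAt.comp_hasFDerivAt x (hasStrictFDerivAt_norm_sq x).hasFDerivAt
  rw [h.fderiv]
  simp only [smul_apply, innerSL_apply_apply, smul_eq_mul, nsmul_eq_mul, Nat.cast_ofNat]
  ring

theorem IsPosHomogeneous.integral_comp_norm_sq_smul_laplacian {c : ℝ} {f : E → F}
    (hhom : IsPosHomogeneous c f) (hf : ∀ x ≠ 0, ContDiffAt ℝ 2 f x) (μ : Measure E)
    [μ.IsAddHaarMeasure] {χ : ℝ → ℝ} (hχ : ContDiff ℝ 1 χ) (hχc : HasCompactSupport χ)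
    (hχ0 : 0 ∉ tsupport χ) :
    ∫ x, χ (‖x‖ ^ 2) • Δ f x ∂μ = -c • ∫ x, (2 * deriv χ (‖x‖ ^ 2)) • f x ∂μ := by
  let b := stdOrthonormalBasis ℝ E
  have hgreen := integral_smul_laplacian μ b (u := fun x ↦ χ (‖x‖ ^ 2))
    (hχ.comp (contDiff_norm_sq ℝ)) (hasCompactSupport_comp_norm_sq hχc) fun x hx ↦
      hf x fun h ↦ zero_notMem_tsupport_comp_norm_sq hχ0 (h ▸ hx)
  have heuler : ∀ x, ∑ i, fderiv ℝ (fun x ↦ χ (‖x‖ ^ 2)) x (b i) • fderiv ℝ f x (b i) =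
      c • (2 * deriv χ (‖x‖ ^ 2)) • f x := fun x ↦ by
    simp only [fderiv_comp_norm_sq_apply (hχ.differentiable one_ne_zero _), mul_smul,
      ← Finset.smul_sum]
    rcases eq_or_ne x 0 with rfl | hx
    · simp [deriv_of_notMem_tsupport hχ0]
    · simp_rw [real_inner_comm _ x, ← map_smul, ← map_sum, b.sum_repr',
        hhom.fderiv_apply_self ((hf x hx).differentiableAt two_ne_zero)]
      module
  rw [neg_smul, ← integral_smul]
  simpa only [← heuler] using hgreen

theorem IsPosHomogeneous.setIntegral_smul_sphere_integral_laplacian [Nontrivial E] {c : ℝ}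
    {f : E → F} (hhom : IsPosHomogeneous c f) (hf : ∀ x ≠ 0, ContDiffAt ℝ 2 f x) (μ : Measure E)
    [μ.IsAddHaarMeasure] {χ : ℝ → ℝ} (hχ : ContDiff ℝ 1 χ) (hχc : HasCompactSupport χ)
    (hχ0 : 0 ∉ tsupport χ) :
    (∫ r in Ioi (0 : ℝ), r ^ (finrank ℝ E + c - 3) * χ (r ^ 2)) •
        ∫ y : sphere (0 : E) 1, Δ f y ∂μ.toSphere =
      (∫ r in Ioi (0 : ℝ), r ^ (finrank ℝ E + c - 3) * χ (r ^ 2)) •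
        (c * (finrank ℝ E + c - 2)) • ∫ y : sphere (0 : E) 1, f y ∂μ.toSphere := by
  have hgreen := hhom.integral_comp_norm_sq_smul_laplacian hf μ hχ hχc hχ0
  have hradial := setIntegral_rpow_mul_deriv_comp_sq (finrank ℝ E + c - 3) hχ hχc hχ0
  rw [hhom.laplacian.integral_fun_norm_smul μ fun r ↦ χ (r ^ 2),
    hhom.integral_fun_norm_smul μ fun r ↦ 2 * deriv χ (r ^ 2),
    show finrank ℝ E + (c - 2) - 1 = finrank ℝ E + c - 3 by ring,
    show finrank ℝ E + c - 1 = finrank ℝ E + c - 3 + 2 by ring, hradial] at hgreen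
  rw [hgreen]
  module

theorem sphere_integral_eq_lap_general (μ : Measure E) [μ.IsAddHaarMeasure] {c : ℝ} {f : E → F}
    (hhom : IsPosHomogeneous c f) (hf : ∀ x ≠ 0, ContDiffAt ℝ 2 f x) :
    ∫ y : sphere (0 : E) 1, Δ f y ∂μ.toSphere =
      (c * (finrank ℝ E + c - 2)) • ∫ y : sphere (0 : E) 1, f y ∂μ.toSphere := by
  rcases subsingleton_or_nontrivial E with hE | hE
  · simp [μ.toSphere_eq_zero_iff.2 hE]
  let χ : ContDiffBump (2 : ℝ) := ⟨1 / 2, 1, by norm_num, by norm_num⟩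
  have hχ0 : 0 ∉ tsupport χ := by
    rw [χ.tsupport_eq, mem_closedBall, Real.dist_eq]
    norm_num [χ]
  have hχ2 : χ (√2 ^ 2) ≠ 0 := by
    rw [Real.sq_sqrt zero_le_two, χ.one_of_mem_closedBall (mem_closedBall_self χ.rIn_pos.le)]
    exact one_ne_zero
  have hpos := setIntegral_rpow_mul_pos (finrank ℝ E + c - 3) (ψ := fun r ↦ χ (r ^ 2))
    (χ.continuous.comp (continuous_pow 2)) (hasCompactSupport_comp_sq χ.hasCompactSupport)
    (zero_notMem_tsupport_comp_sq hχ0) (fun r ↦ χ.nonneg) (Real.sqrt_pos.2 two_pos) hχ2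
  exact smul_right_injective F hpos.ne'
    (hhom.setIntegral_smul_sphere_integral_laplacian hf μ χ.contDiff χ.hasCompactSupport hχ0)

end RadialWeight

theorem lap_eq_laplacian {n : ℕ} {f : EuclideanSpace ℝ (Fin n) → ℝ} (hf : ContDiff ℝ 2 f) :
    lap n f = Δ f := by
  have hf' : Differentiable ℝ (fderiv ℝ f) :=
    (hf.fderiv_right (m := 1) (by norm_num)).differentiable one_ne_zero
  ext x
  simp only [lap,
    InnerProductSpace.laplacian_eq_iteratedFDeriv_orthonormalBasis f
      (EuclideanSpace.basisFun (Fin n) ℝ),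
    iteratedFDeriv_two_apply, EuclideanSpace.basisFun_apply]
  refine Finset.sum_congr rfl fun i _ ↦ ?_
  have h := ((hf' x).hasFDerivAt.clm_apply
    (hasFDerivAt_const (EuclideanSpace.single i (1 : ℝ)) x)).fderiv
  change fderiv ℝ (fun y ↦ fderiv ℝ f y (EuclideanSpace.single i 1)) x
    (EuclideanSpace.single i 1) = _
  rw [h]
  simp

/-- For a homogeneous polynomial `p` of degree `k ≥ 1` on `ℝⁿ` (`n ≥ 2`),
`∫_{S^{n−1}} p = (k(n+k−2))⁻¹ ∫_{S^{n−1}} Δp`, where the sphere carries its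
standard surface measure. -/
theorem sphere_integral_eq_lap (n k : ℕ) (hn : 2 ≤ n) (hk : 1 ≤ k)
    (p : EuclideanSpace ℝ (Fin n) → ℝ)
    (hsmooth : ContDiff ℝ (⊤ : ℕ∞) p)
    (hhom : ∀ (t : ℝ) (x : EuclideanSpace ℝ (Fin n)), p (t • x) = t ^ k * p x) :
    ∫ y : sphere (0 : EuclideanSpace ℝ (Fin n)) 1,
        p (y : EuclideanSpace ℝ (Fin n))
        ∂((volume : Measure (EuclideanSpace ℝ (Fin n))).toSphere)
      = (1 / ((k : ℝ) * ((n : ℝ) + (k : ℝ) - 2))) *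
        ∫ y : sphere (0 : EuclideanSpace ℝ (Fin n)) 1,
          lap n p (y : EuclideanSpace ℝ (Fin n))
          ∂((volume : Measure (EuclideanSpace ℝ (Fin n))).toSphere) := by
  have hpoly : IsPosHomogeneous (k : ℝ) p := fun t _ x ↦ by
    rw [hhom, Real.rpow_natCast, smul_eq_mul]
  have hp : ContDiff ℝ 2 p := contDiff_infty.1 hsmooth 2
  have hk0 : (k : ℝ) ≠ 0 := by positivity
  have hnk0 : (n : ℝ) + k - 2 ≠ 0 := by
    have : (2 : ℝ) < n + k := by exact_mod_cast (by omega : 2 < n + k)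
    linarith
  rw [lap_eq_laplacian hp, sphere_integral_eq_lap_general volume hpoly fun x _ ↦ hp.contDiffAt,
    finrank_euclideanSpace_fin, smul_eq_mul]
  field_simp
end

section
/- Let n > 4, w(x) = (1+|x|²)^{−(n−4)/2}, V a smooth vector field on ℝⁿ, S = 𝒟V its conformal Killing image, i.e. Sᵢⱼ = ∂ᵢVⱼ + ∂ⱼVᵢ − (2/n)(div V)δᵢⱼ, and Ψ = Vᵢ∂ᵢw + ((n−4)/(2n))(div V)w. Then Δ²Ψ − (n−2)n(n+2)(n+4) w^{8/(n−4)} Ψ = −L₁[S]w + Δ(∂ᵢ(Sᵢⱼ∂ⱼw)) + ∂ᵢ(Sᵢⱼ∂ⱼΔw), where L₁[S]w := (4/(n−2))(Ṙic[S])ᵢⱼ∂²ᵢⱼw − α¹ₙ Ṙ[S]Δw − α²ₙ ∂ₖṘ[S]∂ₖw + ((n−4)/2)Q̇[S]w, with Ṙic[S]ᵢⱼ = ½(Sⱼₖ,ᵢₖ + Sᵢₖ,ⱼₖ − Sᵢⱼ,ₖₖ), Ṙ[S] = Sᵢⱼ,ᵢⱼ, Q̇[S] = −(2(n−1))⁻¹ΔṘ[S],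 α¹ₙ = (4+(n−2)²)/(2(n−2)(n−1)), α²ₙ = (n−6)/(2(n−1)). -/
/-!
Write `D = div V`. The commutator of `Δ` with `V·∇` is `div(S∇·)` up to terms that involve `V` only
through `D`, so commuting `V·∇` past `Δ²` produces `Δ div(S∇w) + div(S∇Δw)` and further terms in
`D`. The linearised curvatures of `S = 𝒟V` are also expressions in `D` alone: `Ṙ` is a multiple of
`ΔD`, and `Ṙic` a combination of `∇²D` and `(ΔD)δ`. Comparing coefficients shows that `Δ²`
intertwines the actions of `V` on densities of weight `(n-4)/2` and `(n+4)/2` up to the defect in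
`S`. When `Δ²w` is a multiple of `w ^ ((n+4)/(n-4))`, the chain rule for the Lie derivative of
densities turns the action of weight `(n+4)/2` on `Δ²w` into that of weight `(n-4)/2` on `w`, times
`w ^ (8/(n-4))`. The bubble `(1+|x|²)^(-(n-4)/2)` solves this equation.
-/

namespace CommutingDerivations

section CommRing

variable {ι K A : Type*} [Fintype ι] [CommRing K] [CommRing A] [Algebra K A]
  (d : ι → Derivation K A A)

/-- The Laplacian `Δf = ∑ᵢ dᵢdᵢf` of a family of derivations. -/
def laplacian (f : A) : A := ∑ i, d i (d i f)

/-- The divergence `∑ₖ dₖVₖ` of a vector field. -/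
def divergence (V : ι → A) : A := ∑ k, d k (V k)

/-- The pairing `⟨∇f, ∇g⟩` of two gradients. -/
def gradInner (f g : A) : A := ∑ i, d i f * d i g

/-- The pairing `⟨∇²f, ∇²g⟩` of two Hessians. -/
def hessInner (f g : A) : A := ∑ i, ∑ j, d i (d j f) * d i (d j g)

/-- The derivative `∑ᵢ Vᵢdᵢf` of a function along a vector field. -/
def advect (V : ι → A) (f : A) : A := ∑ i, V i * d i f

/-- The second-order operator `f ↦ div(S∇f)` with coefficient matrix `S`. -/
def divGrad (S : ι → ι → A) (f : A) : A := ∑ i, d i (∑ j, S i j * d j f)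

theorem laplacian_add (f g : A) : laplacian d (f + g) = laplacian d f + laplacian d g := by
  simp [laplacian, Finset.sum_add_distrib]

theorem laplacian_sub (f g : A) : laplacian d (f - g) = laplacian d f - laplacian d g := by
  simp [laplacian, Finset.sum_sub_distrib]

theorem laplacian_smul (r : K) (f : A) : laplacian d (r • f) = r • laplacian d f := by
  simp [laplacian, Finset.smul_sum]

theorem laplacian_nsmul (m : ℕ) (f : A) : laplacian d (m • f) = m • laplacian d f := by
  simp [laplacian, Finset.smul_sum]

theorem laplacian_sum {κ : Type*} (s : Finset κ) (f : κ → A) :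
    laplacian d (∑ k ∈ s, f k) = ∑ k ∈ s, laplacian d (f k) := by
  simp only [laplacian, map_sum]
  exact Finset.sum_comm

theorem gradInner_smul_left (r : K) (f g : A) :
    gradInner d (r • f) g = r • gradInner d f g := by
  simp [gradInner, Finset.smul_sum]

theorem laplacian_mul (f g : A) :
    laplacian d (f * g)
      = laplacian d f * g + 2 • gradInner d f g + f * laplacian d g := by
  simp only [laplacian, gradInner, Derivation.leibniz, map_add, smul_eq_mul, Finset.mul_sum,
    Finset.sum_mul, Finset.smul_sum, ← Finset.sum_add_distrib]
  exact Finset.sum_congr rfl fun i _ => by ring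

theorem divGrad_eq_sum_add_sum (S : ι → ι → A) (f : A) :
    divGrad d S f
      = ∑ j, (∑ i, d i (S i j)) * d j f + ∑ i, ∑ j, S i j * d i (d j f) := by
  simp only [divGrad, map_sum, Derivation.leibniz, smul_eq_mul, Finset.sum_add_distrib,
    Finset.sum_mul]
  rw [add_comm, Finset.sum_comm (f := fun j i => d i (S i j) * d j f)]
  simp only [mul_comm]

variable {d}

theorem laplacian_apply_comm (hd : ∀ i j f, d i (d j f) = d j (d i f)) (i : ι) (f : A) :
    laplacian d (d i f) = d i (laplacian d f) := by
  simp only [laplacian, map_sum]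
  exact Finset.sum_congr rfl fun j _ => by rw [hd j i f, hd j i]

theorem divergence_laplacian (hd : ∀ i j f, d i (d j f) = d j (d i f)) (V : ι → A) :
    divergence d (fun j => laplacian d (V j)) = laplacian d (divergence d V) := by
  simp only [divergence, laplacian_sum, laplacian_apply_comm hd]

theorem laplacian_gradInner (hd : ∀ i j f, d i (d j f) = d j (d i f)) (f g : A) :
    laplacian d (gradInner d f g)
      = gradInner d (laplacian d f) g + 2 • hessInner d f g + gradInner d f (laplacian d g) := by
  rw [hessInner, Finset.sum_comm]
  simp only [gradInner, laplacian_sum, laplacian_mul, laplacian_apply_comm hd,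
    Finset.sum_add_distrib, Finset.smul_sum]

theorem laplacian_laplacian_mul (hd : ∀ i j f, d i (d j f) = d j (d i f)) (f g : A) :
    laplacian d (laplacian d (f * g))
      = laplacian d (laplacian d f) * g + 4 • gradInner d (laplacian d f) g
        + 2 • (laplacian d f * laplacian d g) + 4 • hessInner d f g
        + 4 • gradInner d f (laplacian d g) + f * laplacian d (laplacian d g) := by
  simp only [laplacian_mul, laplacian_add, laplacian_nsmul, laplacian_gradInner hd]
  module

theorem laplacian_advect (hd : ∀ i j f, d i (d j f) = d j (d i f)) (V : ι → A) (f : A) :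
    laplacian d (advect d V f)
      = advect d (fun j => laplacian d (V j)) f + 2 • ∑ i, ∑ j, d i (V j) * d i (d j f)
        + advect d V (laplacian d f) := by
  rw [Finset.sum_comm]
  simp only [advect, gradInner, laplacian_sum, laplacian_mul, laplacian_apply_comm hd,
    Finset.sum_add_distrib, Finset.smul_sum]

end CommRing

section Field

variable {ι K A : Type*} [Fintype ι] [Field K] [CommRing A] [Algebra K A]
  (d : ι → Derivation K A A)

/-- The infinitesimal action `V·∇f + r (div V) f` of a vector field on densities: under a
conformal flow in dimension `N`, a conformal density of weight `w` transforms with `r = w / N`. -/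
def densityLie (r : K) (V : ι → A) (f : A) : A := advect d V f + r • (divergence d V * f)

/-- The conformal Killing operator `𝒟V = dᵢVⱼ + dⱼVᵢ − (2/N)(div V)δᵢⱼ`. The dimension `N` enters
only as a scalar. -/
def conformalKilling [DecidableEq ι] (N : K) (V : ι → A) (i j : ι) : A :=
  d i (V j) + d j (V i) - (2 / N) • (if i = j then divergence d V else 0)

/-- The first variation `Ṙic[S]` of the Ricci tensor at the flat metric, for traceless `S`. -/
def ricciVariation (S : ι → ι → A) (i j : ι) : A :=
  (1 / 2 : K) • ∑ k, (d k (d i (S j k)) + d k (d j (S i k)) - d k (d k (S i j)))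

/-- The first variation `Ṙ[S]` of the scalar curvature at the flat metric, for traceless `S`. -/
def scalarVariation (S : ι → ι → A) : A := ∑ i, ∑ j, d j (d i (S i j))

/-- The first variation `Q̇[S]` of the `Q`-curvature at the flat metric, for traceless `S`. -/
def qVariation (N : K) (S : ι → ι → A) : A :=
  (-(1 / (2 * (N - 1)))) • laplacian d (scalarVariation d S)

/-- The operator `L₁[S]`: the curvature terms in the first variation of the Paneitz operator at the
flat metric. The variation of its leading part `Δ²` is not included. -/
def paneitzVariation (N : K) (S : ι → ι → A) (f : A) : A :=
  (4 / (N - 2)) • ∑ i, ∑ j, ricciVariation d S i j * d i (d j f)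
    - ((4 + (N - 2) ^ 2) / (2 * (N - 2) * (N - 1))) • (scalarVariation d S * laplacian d f)
    - ((N - 6) / (2 * (N - 1))) • gradInner d (scalarVariation d S) f
    + ((N - 4) / 2) • (qVariation d N S * f)

variable {d}

theorem densityLie_smul (r c : K) (V : ι → A) (f : A) :
    densityLie d r V (c • f) = c • densityLie d r V f := by
  simp only [densityLie, advect, Derivation.map_smul, mul_smul_comm, smul_comm r c, smul_add,
    Finset.smul_sum]

variable [DecidableEq ι]

theorem conformalKilling_symm (N : K) (V : ι → A) (i j : ι) :
    conformalKilling d N V i j = conformalKilling d N V j i := by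
  simp only [conformalKilling, eq_comm (a := i), add_comm (d i (V j))]

theorem sum_conformalKilling_mul_hessian (hd : ∀ i j f, d i (d j f) = d j (d i f)) (N : K)
    (V : ι → A) (f : A) :
    ∑ i, ∑ j, conformalKilling d N V i j * d i (d j f)
      = 2 • ∑ i, ∑ j, d i (V j) * d i (d j f) - (2 / N) • (divergence d V * laplacian d f) := by
  have htranspose : ∑ i, ∑ j, d j (V i) * d i (d j f) = ∑ i, ∑ j, d i (V j) * d i (d j f) := by
    rw [Finset.sum_comm]
    exact Finset.sum_congr rfl fun i _ => Finset.sum_congr rfl fun j _ => by rw [hd]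
  have htrace : ∑ i, ∑ j, (if i = j then divergence d V else 0) * d i (d j f)
      = divergence d V * laplacian d f := by
    simp [laplacian, Finset.mul_sum]
  simp only [conformalKilling, sub_mul, add_mul, smul_mul_assoc, Finset.sum_sub_distrib,
    Finset.sum_add_distrib, ← Finset.smul_sum, htranspose, htrace, two_smul]

theorem sum_apply_conformalKilling (hd : ∀ i j f, d i (d j f) = d j (d i f)) (N : K)
    (V : ι → A) (i : ι) :
    ∑ j, d j (conformalKilling d N V i j)
      = laplacian d (V i) + (1 - 2 / N) • d i (divergence d V) := by
  have htrace : ∑ j, d j (if i = j then divergence d V else 0) = d i (divergence d V) := by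
    rw [Finset.sum_eq_single i] <;> simp +contextual [eq_comm]
  have hgrad : ∑ j, d j (d i (V j)) = d i (divergence d V) := by
    simp only [divergence, map_sum, hd i]
  simp only [conformalKilling, map_sub, map_add, Derivation.map_smul, Finset.sum_sub_distrib,
    Finset.sum_add_distrib, ← Finset.smul_sum, htrace, hgrad]
  rw [← laplacian]
  module

theorem divGrad_conformalKilling (hd : ∀ i j f, d i (d j f) = d j (d i f)) (N : K) (V : ι → A)
    (f : A) :
    divGrad d (conformalKilling d N V) f
      = laplacian d (advect d V f) - advect d V (laplacian d f)
        + (1 - 2 / N) • gradInner d (divergence d V) f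
        - (2 / N) • (divergence d V * laplacian d f) := by
  have hdivS (j : ι) : ∑ i, d i (conformalKilling d N V i j)
      = laplacian d (V j) + (1 - 2 / N) • d j (divergence d V) := by
    simp only [conformalKilling_symm N V _ j, sum_apply_conformalKilling hd]
  have hgrad : ∑ j, (∑ i, d i (conformalKilling d N V i j)) * d j f
      = advect d (fun j => laplacian d (V j)) f
        + (1 - 2 / N) • gradInner d (divergence d V) f := by
    simp only [hdivS, advect, gradInner, add_mul, smul_mul_assoc, Finset.sum_add_distrib,
      Finset.smul_sum]
  rw [divGrad_eq_sum_add_sum, hgrad, sum_conformalKilling_mul_hessian hd, laplacian_advect hd]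
  abel

theorem laplacian_laplacian_advect (hd : ∀ i j f, d i (d j f) = d j (d i f)) (N : K) (V : ι → A)
    (f : A) :
    laplacian d (laplacian d (advect d V f))
      = advect d V (laplacian d (laplacian d f))
        + laplacian d (divGrad d (conformalKilling d N V) f)
        + divGrad d (conformalKilling d N V) (laplacian d f)
        - (1 - 2 / N) • (laplacian d (gradInner d (divergence d V) f)
          + gradInner d (divergence d V) (laplacian d f))
        + (2 / N) • (laplacian d (divergence d V * laplacian d f)
          + divergence d V * laplacian d (laplacian d f)) := by
  simp only [divGrad_conformalKilling hd, laplacian_add, laplacian_sub, laplacian_smul]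
  module

theorem sum_apply_apply_conformalKilling (hd : ∀ i j f, d i (d j f) = d j (d i f)) (N : K)
    (V : ι → A) (i j : ι) :
    ∑ k, d k (d i (conformalKilling d N V j k))
      = d i (laplacian d (V j)) + (1 - 2 / N) • d i (d j (divergence d V)) := by
  simp only [hd _ i (conformalKilling d N V j _)]
  rw [← map_sum, sum_apply_conformalKilling hd, map_add, Derivation.map_smul]

theorem laplacian_conformalKilling (hd : ∀ i j f, d i (d j f) = d j (d i f)) (N : K) (V : ι → A) :
    (fun i j => laplacian d (conformalKilling d N V i j))
      = conformalKilling d N (fun i => laplacian d (V i)) := by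
  funext i j
  simp only [conformalKilling, laplacian_sub, laplacian_add, laplacian_smul,
    laplacian_apply_comm hd, divergence_laplacian hd]
  split_ifs <;> simp [laplacian]

theorem scalarVariation_conformalKilling (hd : ∀ i j f, d i (d j f) = d j (d i f)) (N : K)
    (V : ι → A) :
    scalarVariation d (conformalKilling d N V) = (2 - 2 / N) • laplacian d (divergence d V) := by
  simp only [scalarVariation, sum_apply_apply_conformalKilling hd, Finset.sum_add_distrib,
    ← Finset.smul_sum]
  rw [← divergence, divergence_laplacian hd, ← laplacian]
  module

variable [NeZero (2 : K)]

theorem ricciVariation_conformalKilling (hd : ∀ i j f, d i (d j f) = d j (d i f)) (N : K)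
    (V : ι → A) (i j : ι) :
    ricciVariation d (conformalKilling d N V) i j
      = (1 - 2 / N) • d i (d j (divergence d V))
        + (1 / N) • (if i = j then laplacian d (divergence d V) else 0) := by
  have hlap : ∑ k, d k (d k (conformalKilling d N V i j)) = _ :=
    congrFun₂ (laplacian_conformalKilling hd N V) i j
  have htwo : (2 : K) ≠ 0 := two_ne_zero
  rw [ricciVariation, Finset.sum_sub_distrib, Finset.sum_add_distrib,
    sum_apply_apply_conformalKilling hd, sum_apply_apply_conformalKilling hd, hlap,
    conformalKilling, divergence_laplacian hd, hd j i (divergence d V)]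
  match_scalars <;> field_simp <;> ring

theorem sum_ricciVariation_conformalKilling_mul_hessian
    (hd : ∀ i j f, d i (d j f) = d j (d i f)) (N : K) (V : ι → A) (f : A) :
    ∑ i, ∑ j, ricciVariation d (conformalKilling d N V) i j * d i (d j f)
      = (1 - 2 / N) • hessInner d (divergence d V) f
        + (1 / N) • (laplacian d (divergence d V) * laplacian d f) := by
  have htrace : ∑ i, ∑ j, (if i = j then laplacian d (divergence d V) else 0) * d i (d j f)
      = laplacian d (divergence d V) * laplacian d f := by
    simp [laplacian, Finset.mul_sum]
  simp only [ricciVariation_conformalKilling hd, hessInner, add_mul, Finset.sum_add_distrib,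
    smul_mul_assoc, ← Finset.smul_sum, htrace]

theorem paneitzVariation_conformalKilling (hd : ∀ i j f, d i (d j f) = d j (d i f)) {N : K}
    (h₀ : N ≠ 0) (h₁ : N - 1 ≠ 0) (h₂ : N - 2 ≠ 0) (V : ι → A) (f : A) :
    paneitzVariation d N (conformalKilling d N V) f
      = (4 / N) • hessInner d (divergence d V) f
        - ((N - 2) / N) • (laplacian d (divergence d V) * laplacian d f)
        - ((N - 6) / N) • gradInner d (laplacian d (divergence d V)) f
        - ((N - 4) / (2 * N)) • (laplacian d (laplacian d (divergence d V)) * f) := by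
  have htwo : (2 : K) ≠ 0 := two_ne_zero
  simp only [paneitzVariation, qVariation, scalarVariation_conformalKilling hd,
    sum_ricciVariation_conformalKilling_mul_hessian hd, laplacian_smul, gradInner_smul_left,
    smul_mul_assoc]
  match_scalars <;> field_simp
  ring

theorem laplacian_laplacian_densityLie (hd : ∀ i j f, d i (d j f) = d j (d i f)) {N : K}
    (h₀ : N ≠ 0) (h₁ : N - 1 ≠ 0) (h₂ : N - 2 ≠ 0) (V : ι → A) (f : A) :
    laplacian d (laplacian d (densityLie d ((N - 4) / (2 * N)) V f))
        - densityLie d ((N + 4) / (2 * N)) V (laplacian d (laplacian d f))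
      = -paneitzVariation d N (conformalKilling d N V) f
        + laplacian d (divGrad d (conformalKilling d N V) f)
        + divGrad d (conformalKilling d N V) (laplacian d f) := by
  have htwo : (2 : K) ≠ 0 := two_ne_zero
  simp only [paneitzVariation_conformalKilling hd h₀ h₁ h₂, densityLie, laplacian_add,
    laplacian_smul, laplacian_laplacian_advect hd N, laplacian_laplacian_mul hd,
    laplacian_gradInner hd, laplacian_mul d (divergence d V) (laplacian d f)]
  match_scalars <;> field_simp <;> ring

end Field

end CommutingDerivations

open CommutingDerivations
open scoped Manifold ContDiff

section SmoothMap

variable {E : Type*} [NormedAddCommGroup E] [NormedSpace ℝ E]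

variable (E) in
/-- The algebra of smooth real-valued functions on a normed space. -/
abbrev SmoothFunction : Type _ := C^∞⟮𝓘(ℝ, E), E; ℝ⟯

namespace SmoothFunction

theorem contDiff (f : SmoothFunction E) : ContDiff ℝ ∞ f := f.contMDiff.contDiff

theorem differentiableAt (f : SmoothFunction E) (x : E) : DifferentiableAt ℝ f x :=
  f.contDiff.contDiffAt.differentiableAt (by simp)

theorem coe_sum {κ : Type*} (s : Finset κ) (f : κ → SmoothFunction E) :
    ⇑(∑ k ∈ s, f k) = ∑ k ∈ s, ⇑(f k) :=
  map_sum ContMDiffMap.coeFnAlgHom f s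

/-- The directional derivative along `v`, as a derivation of the algebra of smooth functions. -/
noncomputable def dirDeriv (v : E) : Derivation ℝ (SmoothFunction E) (SmoothFunction E) :=
  Derivation.mk'
    { toFun f := ⟨fun x => fderiv ℝ f x v,
        ((f.contDiff.fderiv_right (by simp)).clm_apply contDiff_const).contMDiff⟩
      map_add' f g := by
        ext x
        exact DFunLike.congr_fun (fderiv_add (f.differentiableAt x) (g.differentiableAt x)) v
      map_smul' r f := by
        ext x
        exact DFunLike.congr_fun (fderiv_const_smul (f.differentiableAt x) r) v }
    fun f g => by
      ext x
      exact DFunLike.congr_fun (fderiv_mul (f.differentiableAt x) (g.differentiableAt x)) v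

theorem dirDeriv_apply (v : E) (f : SmoothFunction E) (x : E) :
    dirDeriv v f x = fderiv ℝ f x v := rfl

theorem dirDeriv_comm (v u : E) (f : SmoothFunction E) :
    dirDeriv v (dirDeriv u f) = dirDeriv u (dirDeriv v f) := by
  ext x
  have hf : DifferentiableAt ℝ (fderiv ℝ f) x :=
    (f.contDiff.fderiv_right (m := ∞) (by simp)).contDiffAt.differentiableAt (by simp)
  have hsecond (a b : E) : dirDeriv a (dirDeriv b f) x = fderiv ℝ (fderiv ℝ f) x a b := by
    change fderiv ℝ (fun y => fderiv ℝ f y b) x a = _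
    simp [fderiv_clm_apply hf (differentiableAt_const b)]
  rw [hsecond, hsecond]
  have hsmooth : minSmoothness ℝ 2 ≤ ∞ := by
    rw [minSmoothness_of_isRCLikeNormedField]
    exact WithTop.coe_le_coe.2 le_top
  exact (f.contDiff.contDiffAt.isSymmSndFDerivAt hsmooth).eq v u

/-- The real power `f ^ s` of a positive smooth function. -/
noncomputable def rpow (f : SmoothFunction E) (hf : ∀ x, 0 < f x) (s : ℝ) : SmoothFunction E :=
  ⟨fun x => f x ^ s, (f.contDiff.rpow_const_of_ne fun x => (hf x).ne').contMDiff⟩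

variable (f : SmoothFunction E) (hf : ∀ x, 0 < f x)

theorem rpow_apply (s : ℝ) (x : E) : f.rpow hf s x = f x ^ s := rfl

theorem rpow_sub_one_mul (s : ℝ) : f.rpow hf (s - 1) * f = f.rpow hf s := by
  ext x
  simp [rpow_apply, Real.rpow_sub_one (hf x).ne', (hf x).ne']

theorem dirDeriv_rpow (s : ℝ) (v : E) :
    dirDeriv v (f.rpow hf s) = s • (f.rpow hf (s - 1) * dirDeriv v f) := by
  ext x
  have h := (f.differentiableAt x).hasFDerivAt.rpow_const (p := s) (.inl (hf x).ne')
  change fderiv ℝ (fun y => f y ^ s) x v = _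
  simp [h.fderiv, rpow_apply, dirDeriv_apply, mul_assoc]

theorem laplacian_rpow {ι : Type*} [Fintype ι] (e : ι → E) (s : ℝ) :
    laplacian (fun i => dirDeriv (e i)) (f.rpow hf s)
      = s • (f.rpow hf (s - 1) * laplacian (fun i => dirDeriv (e i)) f)
        + (s * (s - 1)) • (f.rpow hf (s - 2) * gradInner (fun i => dirDeriv (e i)) f f) := by
  have hs : s - 1 - 1 = s - 2 := by ring
  simp only [laplacian, gradInner, dirDeriv_rpow, Derivation.map_smul, Derivation.leibniz,
    smul_eq_mul, mul_smul_comm, smul_add, smul_smul, Finset.sum_add_distrib, Finset.mul_sum,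
    Finset.smul_sum, hs]
  congr 1
  exact Finset.sum_congr rfl fun i _ => by rw [mul_left_comm]

theorem densityLie_rpow {ι : Type*} [Fintype ι] (e : ι → E) (r p : ℝ)
    (V : ι → SmoothFunction E) :
    densityLie (fun i => dirDeriv (e i)) (p * r) V (f.rpow hf p)
      = p • (f.rpow hf (p - 1) * densityLie (fun i => dirDeriv (e i)) r V f) := by
  simp only [densityLie, advect, dirDeriv_rpow, mul_add, smul_add, Finset.mul_sum,
    Finset.smul_sum, mul_smul_comm, mul_smul]
  simp only [← rpow_sub_one_mul f hf p, mul_left_comm]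

end SmoothFunction

end SmoothMap

section EuclideanSpace

variable {n : ℕ}

variable (n) in
/-- The partial derivatives on `ℝⁿ`, as derivations of the algebra of smooth functions. -/
noncomputable def partialDeriv (i : Fin n) :
    Derivation ℝ (SmoothFunction (EuclideanSpace ℝ (Fin n)))
      (SmoothFunction (EuclideanSpace ℝ (Fin n))) :=
  SmoothFunction.dirDeriv (EuclideanSpace.single i 1)

theorem partialDeriv_comm (i j : Fin n) (f : SmoothFunction (EuclideanSpace ℝ (Fin n))) :
    partialDeriv n i (partialDeriv n j f) = partialDeriv n j (partialDeriv n i f) :=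
  SmoothFunction.dirDeriv_comm _ _ f

variable (S : Fin n → Fin n → SmoothFunction (EuclideanSpace ℝ (Fin n)))
  (V : Fin n → SmoothFunction (EuclideanSpace ℝ (Fin n)))
  (f : SmoothFunction (EuclideanSpace ℝ (Fin n)))

theorem coe_partialDeriv (i : Fin n) : ⇑(partialDeriv n i f) = pd n i f := rfl

theorem coe_laplacian : ⇑(laplacian (partialDeriv n) f) = lap n f := by
  ext x
  simp [laplacian, lap, SmoothFunction.coe_sum, coe_partialDeriv]

theorem coe_divGrad :
    ⇑(divGrad (partialDeriv n) S f)
      = fun y => ∑ i, pd n i (fun z => ∑ j, S i j z * pd n j f z) y := by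
  ext x
  rw [divGrad, SmoothFunction.coe_sum, Finset.sum_apply]
  refine Finset.sum_congr rfl fun i _ => ?_
  rw [coe_partialDeriv]
  congr 1
  ext z
  simp [SmoothFunction.coe_sum, coe_partialDeriv]

theorem densityLie_partialDeriv_rpow (hf : ∀ x, 0 < f x) (r p : ℝ) :
    densityLie (partialDeriv n) (p * r) V (f.rpow hf p)
      = p • (f.rpow hf (p - 1) * densityLie (partialDeriv n) r V f) :=
  f.densityLie_rpow hf _ r p V

theorem laplacian_laplacian_densityLie_rpow {c : ℝ} (hn₂ : 2 < n) (hn₄ : n ≠ 4)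
    (w : SmoothFunction (EuclideanSpace ℝ (Fin n))) (hw : ∀ x, 0 < w x)
    (hΔ : laplacian (partialDeriv n) (laplacian (partialDeriv n) w)
      = (((n : ℝ) - 4) * c) • w.rpow hw (((n : ℝ) + 4) / ((n : ℝ) - 4))) :
    laplacian (partialDeriv n) (laplacian (partialDeriv n)
          (densityLie (partialDeriv n) (((n : ℝ) - 4) / (2 * n)) V w))
        - (c * ((n : ℝ) + 4)) • (w.rpow hw (8 / ((n : ℝ) - 4))
          * densityLie (partialDeriv n) (((n : ℝ) - 4) / (2 * n)) V w)
      = -paneitzVariation (partialDeriv n) (n : ℝ) (conformalKilling (partialDeriv n) (n : ℝ) V) w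
        + laplacian (partialDeriv n)
          (divGrad (partialDeriv n) (conformalKilling (partialDeriv n) (n : ℝ) V) w)
        + divGrad (partialDeriv n) (conformalKilling (partialDeriv n) (n : ℝ) V)
          (laplacian (partialDeriv n) w) := by
  have h₂ : (2 : ℝ) < n := mod_cast hn₂
  have h₄ : (n : ℝ) - 4 ≠ 0 := sub_ne_zero.2 (mod_cast hn₄)
  have hr : ((n : ℝ) + 4) / (2 * n) = (n + 4) / (n - 4) * ((n - 4) / (2 * n)) := by
    field_simp
  have hp : ((n : ℝ) + 4) / (n - 4) - 1 = 8 / (n - 4) := by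
    field_simp
    ring
  have hlin : densityLie (partialDeriv n) (((n : ℝ) + 4) / (2 * n)) V
        (laplacian (partialDeriv n) (laplacian (partialDeriv n) w))
      = (c * ((n : ℝ) + 4)) • (w.rpow hw (8 / ((n : ℝ) - 4))
          * densityLie (partialDeriv n) (((n : ℝ) - 4) / (2 * n)) V w) := by
    rw [hΔ, densityLie_smul, hr, densityLie_partialDeriv_rpow, hp, smul_smul]
    congr 1
    field_simp
  rw [← hlin]
  exact laplacian_laplacian_densityLie partialDeriv_comm (by linarith) (by linarith)
    (by linarith) V w

theorem coe_divergence :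
    ⇑(divergence (partialDeriv n) V) = fun x => ∑ k, pd n k (V k) x := by
  ext x
  simp [divergence, SmoothFunction.coe_sum, coe_partialDeriv]

theorem coe_densityLie (r : ℝ) :
    ⇑(densityLie (partialDeriv n) r V f)
      = fun x => ∑ i, V i x * pd n i f x + r * divergence (partialDeriv n) V x * f x := by
  ext x
  simp [densityLie, advect, SmoothFunction.coe_sum, coe_partialDeriv, mul_assoc]

theorem coe_conformalKilling (N : ℝ) (i j : Fin n) :
    ⇑(conformalKilling (partialDeriv n) N V i j)
      = fun x => pd n i (V j) x + pd n j (V i) x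
        - 2 / N * divergence (partialDeriv n) V x * (if i = j then 1 else 0) := by
  ext x
  rw [conformalKilling]
  split_ifs <;> simp [coe_partialDeriv]

theorem coe_ricciVariation (i j : Fin n) :
    ⇑(ricciVariation (partialDeriv n) S i j)
      = fun x => 1 / 2 * ∑ k, (pd n k (pd n i (S j k)) x + pd n k (pd n j (S i k)) x
        - pd n k (pd n k (S i j)) x) := by
  ext x
  simp [ricciVariation, SmoothFunction.coe_sum, coe_partialDeriv]

theorem coe_scalarVariation :
    ⇑(scalarVariation (partialDeriv n) S) = fun x => ∑ i, ∑ j, pd n j (pd n i (S i j)) x := by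
  ext x
  simp [scalarVariation, SmoothFunction.coe_sum, coe_partialDeriv]

theorem coe_qVariation (N : ℝ) :
    ⇑(qVariation (partialDeriv n) N S)
      = fun x => -(1 / (2 * (N - 1))) * lap n ⇑(scalarVariation (partialDeriv n) S) x := by
  ext x
  simp [qVariation, coe_laplacian]

theorem coe_paneitzVariation (N : ℝ) :
    ⇑(paneitzVariation (partialDeriv n) N S f)
      = fun x => 4 / (N - 2)
            * (∑ i, ∑ j, ricciVariation (partialDeriv n) S i j x * pd n i (pd n j f) x)
          - (4 + (N - 2) ^ 2) / (2 * (N - 2) * (N - 1))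
            * scalarVariation (partialDeriv n) S x * lap n f x
          - (N - 6) / (2 * (N - 1))
            * (∑ k, pd n k ⇑(scalarVariation (partialDeriv n) S) x * pd n k f x)
          + (N - 4) / 2 * qVariation (partialDeriv n) N S x * f x := by
  ext x
  simp [paneitzVariation, gradInner, SmoothFunction.coe_sum, coe_partialDeriv, coe_laplacian,
    mul_assoc]

variable (n) in
/-- The function `1 + |x|²` on `ℝⁿ`. -/
noncomputable def onePlusNormSq : SmoothFunction (EuclideanSpace ℝ (Fin n)) :=
  ⟨fun x => 1 + ‖x‖ ^ 2, (contDiff_const.add (contDiff_norm_sq ℝ)).contMDiff⟩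

/-- The coordinate function `xᵢ` on `ℝⁿ`. -/
noncomputable def coordinate (i : Fin n) : SmoothFunction (EuclideanSpace ℝ (Fin n)) :=
  (EuclideanSpace.proj i : EuclideanSpace ℝ (Fin n) →L[ℝ] ℝ)

theorem onePlusNormSq_apply (x : EuclideanSpace ℝ (Fin n)) :
    onePlusNormSq n x = 1 + ‖x‖ ^ 2 := rfl

theorem coordinate_apply (i : Fin n) (x : EuclideanSpace ℝ (Fin n)) : coordinate i x = x i := rfl

theorem onePlusNormSq_pos (x : EuclideanSpace ℝ (Fin n)) : 0 < onePlusNormSq n x := by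
  rw [onePlusNormSq_apply]
  positivity

theorem partialDeriv_onePlusNormSq (i : Fin n) :
    partialDeriv n i (onePlusNormSq n) = (2 : ℝ) • coordinate i := by
  ext x
  change fderiv ℝ (fun y : EuclideanSpace ℝ (Fin n) => 1 + ‖y‖ ^ 2) x _ = _
  rw [((hasStrictFDerivAt_norm_sq x).hasFDerivAt.const_add 1).fderiv]
  simp [coordinate_apply, EuclideanSpace.inner_single_right]

theorem partialDeriv_coordinate_self (i : Fin n) : partialDeriv n i (coordinate i) = 1 := by
  ext x
  change fderiv ℝ (EuclideanSpace.proj i : EuclideanSpace ℝ (Fin n) →L[ℝ] ℝ) x _ = _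
  rw [ContinuousLinearMap.fderiv]
  simp

theorem laplacian_onePlusNormSq :
    laplacian (partialDeriv n) (onePlusNormSq n) = (2 * n : ℝ) • 1 := by
  simp only [laplacian, partialDeriv_onePlusNormSq, Derivation.map_smul,
    partialDeriv_coordinate_self, Finset.sum_const, Finset.card_univ, Fintype.card_fin]
  module

theorem gradInner_onePlusNormSq :
    gradInner (partialDeriv n) (onePlusNormSq n) (onePlusNormSq n)
      = (4 : ℝ) • (onePlusNormSq n - 1) := by
  ext x
  calc gradInner (partialDeriv n) (onePlusNormSq n) (onePlusNormSq n) x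
      = ∑ i, 2 * (2 * (x i * x i)) := by
        simp [gradInner, partialDeriv_onePlusNormSq, SmoothFunction.coe_sum, coordinate_apply]
    _ = 4 * ‖x‖ ^ 2 := by
        rw [EuclideanSpace.real_norm_sq_eq, Finset.mul_sum]
        exact Finset.sum_congr rfl fun i _ => by ring
    _ = ((4 : ℝ) • (onePlusNormSq n - 1)) x := by simp [onePlusNormSq_apply]

variable (n) in
/-- The bubble `(1 + |x|²) ^ s`. -/
noncomputable def bubble (s : ℝ) : SmoothFunction (EuclideanSpace ℝ (Fin n)) :=
  (onePlusNormSq n).rpow onePlusNormSq_pos s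

theorem bubble_pos (s : ℝ) (x : EuclideanSpace ℝ (Fin n)) : 0 < bubble n s x :=
  Real.rpow_pos_of_pos (onePlusNormSq_pos x) s

theorem bubble_rpow (s p : ℝ) (x : EuclideanSpace ℝ (Fin n)) :
    bubble n s x ^ p = bubble n (s * p) x :=
  (Real.rpow_mul (onePlusNormSq_pos x).le s p).symm

theorem laplacian_bubble (s : ℝ) :
    laplacian (partialDeriv n) (bubble n s)
      = (2 * s * (n + 2 * s - 2)) • bubble n (s - 1) - (4 * s * (s - 1)) • bubble n (s - 2) := by
  have hchain : laplacian (partialDeriv n) (bubble n s)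
      = s • (bubble n (s - 1) * laplacian (partialDeriv n) (onePlusNormSq n))
        + (s * (s - 1)) • (bubble n (s - 2)
          * gradInner (partialDeriv n) (onePlusNormSq n) (onePlusNormSq n)) :=
    (onePlusNormSq n).laplacian_rpow onePlusNormSq_pos _ s
  have hmul : bubble n (s - 2) * onePlusNormSq n = bubble n (s - 1) := by
    have hs : s - 2 = s - 1 - 1 := by ring
    rw [bubble, hs, SmoothFunction.rpow_sub_one_mul, ← bubble]
  rw [hchain, laplacian_onePlusNormSq, gradInner_onePlusNormSq, mul_smul_comm, mul_smul_comm,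
    mul_one, mul_sub (bubble n (s - 2)), hmul, mul_one]
  module

theorem laplacian_laplacian_bubble :
    laplacian (partialDeriv n) (laplacian (partialDeriv n) (bubble n (-((n - 4) / 2))))
      = ((n - 4) * ((n - 2) * n * (n + 2)) : ℝ) • bubble n (-((n + 4) / 2)) := by
  have h₁ : -(((n : ℝ) - 4) / 2) - 1 = -((n - 2) / 2) := by ring
  have h₂ : -(((n : ℝ) - 4) / 2) - 2 = -(n / 2) := by ring
  have h₃ : -(((n : ℝ) - 2) / 2) - 1 = -(n / 2) := by ring
  have h₄ : -(((n : ℝ) - 2) / 2) - 2 = -((n + 2) / 2) := by ring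
  have h₅ : -((n : ℝ) / 2) - 1 = -((n + 2) / 2) := by ring
  have h₆ : -((n : ℝ) / 2) - 2 = -((n + 4) / 2) := by ring
  simp only [laplacian_bubble, laplacian_sub, laplacian_smul, h₁, h₂, h₃, h₄, h₅, h₆]
  module

theorem lap_lap_bubble (hn : n ≠ 4) (x : EuclideanSpace ℝ (Fin n)) :
    lap n (lap n (bubble n (-((n - 4) / 2)))) x
      = (n - 4) * ((n - 2) * n * (n + 2))
        * bubble n (-((n - 4) / 2)) x ^ (((n : ℝ) + 4) / (n - 4)) := by
  have hn' : (n : ℝ) - 4 ≠ 0 := sub_ne_zero.2 (mod_cast hn)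
  have hexp : -(((n : ℝ) - 4) / 2) * ((n + 4) / (n - 4)) = -((n + 4) / 2) := by
    field_simp
  rw [← coe_laplacian, ← coe_laplacian, laplacian_laplacian_bubble, bubble_rpow, hexp]
  rfl

end EuclideanSpace

theorem conformal_killing_linearized_identity_general (n : ℕ) {c : ℝ} (hn₂ : 2 < n) (hn₄ : n ≠ 4)
    (V : Fin n → EuclideanSpace ℝ (Fin n) → ℝ)
    (hV : ∀ i, ContDiff ℝ (⊤ : ℕ∞) (V i))
    (w : EuclideanSpace ℝ (Fin n) → ℝ)
    (hw : ContDiff ℝ (⊤ : ℕ∞) w) (hw_pos : ∀ x, 0 < w x)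
    (hw_eq : ∀ x, lap n (lap n w) x
      = ((n : ℝ) - 4) * c * w x ^ (((n : ℝ) + 4) / ((n : ℝ) - 4)))
    (divV : EuclideanSpace ℝ (Fin n) → ℝ)
    (hdivV : ∀ x, divV x = ∑ k, pd n k (V k) x)
    (S : EuclideanSpace ℝ (Fin n) → Fin n → Fin n → ℝ)
    (hS : ∀ x, ∀ i j, S x i j = pd n i (V j) x + pd n j (V i) x
      - (2 / (n : ℝ)) * divV x * (if i = j then 1 else 0))
    (Ψ : EuclideanSpace ℝ (Fin n) → ℝ)
    (hΨ : ∀ x, Ψ x = (∑ i, V i x * pd n i w x) + (((n : ℝ) - 4) / (2 * (n : ℝ))) * divV x * w x)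
    (Ric : EuclideanSpace ℝ (Fin n) → Fin n → Fin n → ℝ)
    (hRic : ∀ x, ∀ i j, Ric x i j = (1 / 2) * ∑ k,
      (pd n k (pd n i (fun y => S y j k)) x + pd n k (pd n j (fun y => S y i k)) x
        - pd n k (pd n k (fun y => S y i j)) x))
    (Rdot : EuclideanSpace ℝ (Fin n) → ℝ)
    (hRdot : ∀ x, Rdot x = ∑ i, ∑ j, pd n j (pd n i (fun y => S y i j)) x)
    (Qdot : EuclideanSpace ℝ (Fin n) → ℝ)
    (hQdot : ∀ x, Qdot x = -(1 / (2 * ((n : ℝ) - 1))) * lap n Rdot x)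
    (L1Sw : EuclideanSpace ℝ (Fin n) → ℝ)
    (hL1Sw : ∀ x, L1Sw x
      = (4 / ((n : ℝ) - 2)) * (∑ i, ∑ j, Ric x i j * pd n i (pd n j w) x)
        - ((4 + ((n : ℝ) - 2) ^ 2) / (2 * ((n : ℝ) - 2) * ((n : ℝ) - 1))) * Rdot x * lap n w x
        - (((n : ℝ) - 6) / (2 * ((n : ℝ) - 1))) * (∑ k, pd n k Rdot x * pd n k w x)
        + (((n : ℝ) - 4) / 2) * Qdot x * w x)
    (x : EuclideanSpace ℝ (Fin n)) :
    lap n (lap n Ψ) x - c * ((n : ℝ) + 4) * w x ^ ((8 : ℝ) / ((n : ℝ) - 4)) * Ψ x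
      = - L1Sw x
        + lap n (fun y => ∑ i, pd n i (fun z => ∑ j, S z i j * pd n j w z) y) x
        + ∑ i, pd n i (fun z => ∑ j, S z i j * pd n j (lap n w) z) x := by
  obtain ⟨V, rfl⟩ : ∃ V' : Fin n → SmoothFunction (EuclideanSpace ℝ (Fin n)),
      V = fun i => ⇑(V' i) :=
    ⟨fun i => ⟨V i, (hV i).contMDiff⟩, rfl⟩
  obtain ⟨w, rfl⟩ : ∃ w' : SmoothFunction (EuclideanSpace ℝ (Fin n)), w = w' :=
    ⟨⟨w, hw.contMDiff⟩, rfl⟩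
  obtain rfl : divV = divergence (partialDeriv n) V :=
    (funext hdivV).trans (coe_divergence V).symm
  obtain rfl : S = fun x i j => conformalKilling (partialDeriv n) (n : ℝ) V i j x :=
    funext₃ fun x i j => (hS x i j).trans (congrFun (coe_conformalKilling V n i j) x).symm
  obtain rfl : Ψ = densityLie (partialDeriv n) ((n - 4) / (2 * n) : ℝ) V w :=
    (funext hΨ).trans (coe_densityLie V w _).symm
  obtain rfl : Ric = fun x i j => ricciVariation (partialDeriv n)
      (conformalKilling (partialDeriv n) (n : ℝ) V) i j x :=
    funext₃ fun x i j => (hRic x i j).trans (congrFun (coe_ricciVariation _ i j) x).symm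
  obtain rfl : Rdot = scalarVariation (partialDeriv n)
      (conformalKilling (partialDeriv n) (n : ℝ) V) :=
    (funext hRdot).trans (coe_scalarVariation _).symm
  obtain rfl : Qdot = qVariation (partialDeriv n) (n : ℝ)
      (conformalKilling (partialDeriv n) (n : ℝ) V) :=
    (funext hQdot).trans (coe_qVariation _ _).symm
  obtain rfl : L1Sw = paneitzVariation (partialDeriv n) (n : ℝ)
      (conformalKilling (partialDeriv n) (n : ℝ) V) w :=
    (funext hL1Sw).trans (coe_paneitzVariation _ w _).symm
  have hw_eq' : laplacian (partialDeriv n) (laplacian (partialDeriv n) w)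
      = (((n : ℝ) - 4) * c) • w.rpow hw_pos (((n : ℝ) + 4) / ((n : ℝ) - 4)) := by
    ext x
    rw [coe_laplacian, coe_laplacian]
    exact hw_eq x
  have key := DFunLike.congr_fun
    (laplacian_laplacian_densityLie_rpow V hn₂ hn₄ w hw_pos hw_eq') x
  simpa [coe_laplacian, coe_divGrad, SmoothFunction.rpow_apply, mul_assoc] using key

/-- Let `n > 4`, `w(x) = (1+|x|²)^{−(n−4)/2}`, `V` a smooth vector field on `ℝⁿ`,
`S = 𝒟V` its conformal Killing image `Sᵢⱼ = ∂ᵢVⱼ + ∂ⱼVᵢ − (2/n)(div V)δᵢⱼ`, and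
`Ψ = Vᵢ∂ᵢw + ((n−4)/(2n))(div V)w`. Then
`Δ²Ψ − (n−2)n(n+2)(n+4) w^{8/(n−4)} Ψ = −L₁[S]w + Δ(∂ᵢ(Sᵢⱼ∂ⱼw)) + ∂ᵢ(Sᵢⱼ∂ⱼΔw)`,
where `L₁[S]w = (4/(n−2))(Ṙic[S])ᵢⱼ∂²ᵢⱼw − α¹ₙ Ṙ[S]Δw − α²ₙ ∂ₖṘ[S]∂ₖw + ((n−4)/2)Q̇[S]w`
with `Ṙic[S]ᵢⱼ = ½(Sⱼₖ,ᵢₖ + Sᵢₖ,ⱼₖ − Sᵢⱼ,ₖₖ)`, `Ṙ[S] = Sᵢⱼ,ᵢⱼ`,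
`Q̇[S] = −(2(n−1))⁻¹ΔṘ[S]`, `α¹ₙ = (4+(n−2)²)/(2(n−2)(n−1))`, `α²ₙ = (n−6)/(2(n−1))`. -/
theorem conformal_killing_linearized_identity (n : ℕ) (hn : 4 < n)
    (V : Fin n → EuclideanSpace ℝ (Fin n) → ℝ)
    (hV : ∀ i, ContDiff ℝ (⊤ : ℕ∞) (V i))
    (w : EuclideanSpace ℝ (Fin n) → ℝ)
    (hw : ∀ x, w x = (1 + ‖x‖ ^ 2) ^ (-(((n : ℝ) - 4) / 2)))
    (divV : EuclideanSpace ℝ (Fin n) → ℝ)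
    (hdivV : ∀ x, divV x = ∑ k, pd n k (V k) x)
    (S : EuclideanSpace ℝ (Fin n) → Fin n → Fin n → ℝ)
    (hS : ∀ x, ∀ i j, S x i j = pd n i (V j) x + pd n j (V i) x
      - (2 / (n : ℝ)) * divV x * (if i = j then 1 else 0))
    (Ψ : EuclideanSpace ℝ (Fin n) → ℝ)
    (hΨ : ∀ x, Ψ x = (∑ i, V i x * pd n i w x) + (((n : ℝ) - 4) / (2 * (n : ℝ))) * divV x * w x)
    (Ric : EuclideanSpace ℝ (Fin n) → Fin n → Fin n → ℝ)
    (hRic : ∀ x, ∀ i j, Ric x i j = (1 / 2) * ∑ k,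
      (pd n k (pd n i (fun y => S y j k)) x + pd n k (pd n j (fun y => S y i k)) x
        - pd n k (pd n k (fun y => S y i j)) x))
    (Rdot : EuclideanSpace ℝ (Fin n) → ℝ)
    (hRdot : ∀ x, Rdot x = ∑ i, ∑ j, pd n j (pd n i (fun y => S y i j)) x)
    (Qdot : EuclideanSpace ℝ (Fin n) → ℝ)
    (hQdot : ∀ x, Qdot x = -(1 / (2 * ((n : ℝ) - 1))) * lap n Rdot x)
    (L1Sw : EuclideanSpace ℝ (Fin n) → ℝ)
    (hL1Sw : ∀ x, L1Sw x
      = (4 / ((n : ℝ) - 2)) * (∑ i, ∑ j, Ric x i j * pd n i (pd n j w) x)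
        - ((4 + ((n : ℝ) - 2) ^ 2) / (2 * ((n : ℝ) - 2) * ((n : ℝ) - 1))) * Rdot x * lap n w x
        - (((n : ℝ) - 6) / (2 * ((n : ℝ) - 1))) * (∑ k, pd n k Rdot x * pd n k w x)
        + (((n : ℝ) - 4) / 2) * Qdot x * w x)
    (x : EuclideanSpace ℝ (Fin n)) :
    lap n (lap n Ψ) x
      - ((n : ℝ) - 2) * (n : ℝ) * ((n : ℝ) + 2) * ((n : ℝ) + 4)
          * w x ^ ((8 : ℝ) / ((n : ℝ) - 4)) * Ψ x
      = - L1Sw x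
        + lap n (fun y => ∑ i, pd n i (fun z => ∑ j, S z i j * pd n j w z) y) x
        + ∑ i, pd n i (fun z => ∑ j, S z i j * pd n j (lap n w) z) x := by
  obtain rfl : w = bubble n (-((n - 4) / 2)) := funext hw
  exact conformal_killing_linearized_identity_general n (by lia) (by lia) V hV _
    (bubble n _).contDiff (bubble_pos _) (lap_lap_bubble (by lia)) divV hdivV S hS Ψ hΨ Ric hRic
    Rdot hRdot Qdot hQdot L1Sw hL1Sw x
end
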